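/- Let D be a unique factorization domain, let a, b, c ∈ D with gcd(a,b) = 1, and let Ψ : D[x₁] → D[x₁,x₂] be the D-algebra homomorphism with Ψ(x₁) = a·x₁ + b·x₂ + c. If f ∈ D[x₁] is irreducible in D[x₁], then Ψ(f) is irreducible in D[x₁,x₂]. -/

import Mathlib

/-!
Over the fraction field `K` of `D` some coefficient of `ℓ = ∑ aᵢ Xᵢ + c` is invertible, so `ℓ` is
the image of a variable under an automorphism of `K[X]`; hence `f(ℓ)` is irreducible over `K`
whenever `f` is. By Gauss's lemma it remains to see that `f(ℓ)` has no nonunit constant divisor `d`.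
Putting all variables but `Xᵢ` equal to `0` shows that `d` divides `gₖ aᵢᵏ` for all `i` and `k`,
where `g(t) = f(t + c) = ∑ gₖ tᵏ`. As the `aᵢ` have no common factor, `d` divides every `gₖ`, hence
`g`, hence the primitive polynomial `f`.
-/

open MvPolynomial

section CommonDivisors

variable {M ι : Type*}

lemma exists_not_isUnit_dvd_of_forall_dvd_pow [CommMonoid M] [DecompositionMonoid M] {a : ι → M}
    {d : M} {k : ℕ} (hd : ¬ IsUnit d) (s : Finset ι) (h : ∀ i ∈ s, d ∣ a i ^ k) :
    ∃ e, ¬ IsUnit e ∧ e ∣ d ∧ ∀ i ∈ s, e ∣ a i := by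
  classical
  induction s using Finset.induction_on with
  | empty => exact ⟨d, hd, dvd_rfl, by simp⟩
  | insert j s _ ih =>
    rw [Finset.forall_mem_insert] at h
    obtain ⟨e, he, hed, hes⟩ := ih h.2
    have not_coprime : ¬ IsRelPrime e (a j) := fun hej ↦
      he (hej.pow_right.isUnit_of_dvd (hed.trans h.1))
    simp only [IsRelPrime, not_forall] at not_coprime
    obtain ⟨e', he'e, he'j, he'⟩ := not_coprime
    exact ⟨e', he', he'e.trans hed,
      (Finset.forall_mem_insert ..).2 ⟨he'j, fun i hi ↦ he'e.trans (hes i hi)⟩⟩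

lemma dvd_of_forall_dvd_mul_pow [CommMonoidWithZero M] [IsGCDMonoid M] {a : ι → M} {s : Finset ι}
    (ha : ∀ d, (∀ i ∈ s, d ∣ a i) → IsUnit d) {d g : M} {k : ℕ}
    (h : ∀ i ∈ s, d ∣ g * a i ^ k) : d ∣ g := by
  have := IsGCDMonoid.isCancelMulZero (α := M)
  obtain ⟨_⟩ := ‹IsGCDMonoid M›
  obtain ⟨d', g', hd, hg, hcoprime⟩ := extract_gcd d g
  rcases eq_or_ne (gcd d g) 0 with h0 | h0
  · rw [hg, h0, zero_mul]
    exact dvd_zero d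
  have hd'_pow : ∀ i ∈ s, d' ∣ a i ^ k := fun i hi ↦ by
    have hdvd : gcd d g * d' ∣ gcd d g * (g' * a i ^ k) := by
      rw [← mul_assoc, ← hd, ← hg]
      exact h i hi
    exact (gcd_isUnit_iff_isRelPrime.1 hcoprime).dvd_of_dvd_mul_left
      ((mul_dvd_mul_iff_left h0).1 hdvd)
  have hd' : IsUnit d' := by
    by_contra hd'
    obtain ⟨e, he, -, hes⟩ := exists_not_isUnit_dvd_of_forall_dvd_pow hd' s hd'_pow
    exact he (ha e hes)
  rw [hd, hd'.mul_right_dvd]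
  exact gcd_dvd_right d g

end CommonDivisors

section TriangularAutomorphism

variable {σ R : Type*} [DecidableEq σ]

lemma aeval_update_X_of_mem_supported [CommSemiring R] {i : σ} {r : MvPolynomial σ R}
    (hr : r ∈ supported R {i}ᶜ) (p : MvPolynomial σ R) : aeval (Function.update X i p) r = r := by
  have hX : Set.EqOn (aeval (Function.update X i p)) (AlgHom.id R (MvPolynomial σ R))
      (X '' {i}ᶜ) := by
    rintro _ ⟨j, hj, rfl⟩
    simp [Function.update_of_ne hj]
  exact AlgHom.eqOn_adjoin_iff.2 hX hr

/-- The triangular automorphism of `R[X]` sending `Xᵢ` to `u Xᵢ + r`, where `r` does not involve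
`Xᵢ`, and fixing all other variables. It is used to turn `Xᵢ` into an affine-linear form. -/
noncomputable def triangularEquiv [CommRing R] (i : σ) (u : Rˣ) (r : MvPolynomial σ R)
    (hr : r ∈ supported R {i}ᶜ) : MvPolynomial σ R ≃ₐ[R] MvPolynomial σ R :=
  have hu : (C (u : R) * C (↑u⁻¹ : R) : MvPolynomial σ R) = 1 := by
    rw [← C_mul, u.mul_inv, C_1]
  AlgEquiv.ofAlgHom (aeval (Function.update X i (C (u : R) * X i + r)))
    (aeval (Function.update X i (C (↑u⁻¹ : R) * (X i - r))))
    (by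
      ext j : 1
      rcases eq_or_ne j i with rfl | hj
      · simp only [AlgHom.comp_apply, AlgHom.id_apply, aeval_X, Function.update_self, map_mul,
          map_sub, algHom_C, algebraMap_eq, aeval_update_X_of_mem_supported hr]
        linear_combination X j * hu
      · simp [Function.update_of_ne hj])
    (by
      ext j : 1
      rcases eq_or_ne j i with rfl | hj
      · simp only [AlgHom.comp_apply, AlgHom.id_apply, aeval_X, Function.update_self, map_add,
          map_mul, algHom_C, algebraMap_eq, aeval_update_X_of_mem_supported hr]
        linear_combination (X j - r) * hu
      · simp [Function.update_of_ne hj])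

lemma triangularEquiv_X_self [CommRing R] (i : σ) (u : Rˣ) (r : MvPolynomial σ R)
    (hr : r ∈ supported R {i}ᶜ) : triangularEquiv i u r hr (X i) = C (u : R) * X i + r := by
  simp [triangularEquiv]

end TriangularAutomorphism

section AffineForm

variable {σ R S : Type*}

/-- The affine-linear form `∑ aᵢ Xᵢ + c` substituted for the variable of a univariate polynomial;
the coefficients are finitely supported so that there may be infinitely many variables. -/
noncomputable def affineForm [CommSemiring R] (a : σ →₀ R) (c : R) : MvPolynomial σ R :=
  a.sum (fun i r ↦ C r * X i) + C c

lemma map_affineForm [CommSemiring R] [CommSemiring S] (φ : R →+* S) (a : σ →₀ R) (c : R) :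
    map φ (affineForm a c) = affineForm (a.mapRange φ φ.map_zero) (φ c) := by
  rw [affineForm, affineForm, Finsupp.sum_mapRange_index (by simp)]
  simp [Finsupp.sum]

lemma map_aeval_affineForm [CommSemiring R] [CommSemiring S] (φ : R →+* S) (a : σ →₀ R) (c : R)
    (f : Polynomial R) : map φ (Polynomial.aeval (affineForm a c) f) =
      Polynomial.aeval (affineForm (a.mapRange φ φ.map_zero) (φ c)) (f.map φ) := by
  have hC : (map φ).comp C = (C : S →+* MvPolynomial σ S).comp φ := RingHom.ext fun r ↦ map_C φ r
  rw [← map_affineForm, Polynomial.aeval_def, Polynomial.aeval_def, Polynomial.hom_eval₂,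
    Polynomial.eval₂_map, algebraMap_eq, algebraMap_eq, hC]

lemma aeval_single_affineForm [CommSemiring R] [DecidableEq σ] (i : σ) (a : σ →₀ R) (c : R) :
    aeval (Pi.single i Polynomial.X) (affineForm a c) =
      Polynomial.C (a i) * Polynomial.X + Polynomial.C c := by
  have hsum : a.sum (fun j r ↦ Polynomial.C r * (Pi.single i Polynomial.X : σ → Polynomial R) j) =
      Polynomial.C (a i) * Polynomial.X := by
    rw [Finsupp.sum_eq_single i (fun j _ hj ↦ by rw [Pi.single_eq_of_ne hj, mul_zero]) (by simp),
      Pi.single_eq_same]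
  rw [affineForm, map_add, map_finsuppSum, algHom_C, ← hsum]
  simp only [map_mul, algHom_C, aeval_X, Polynomial.algebraMap_eq]

lemma exists_algEquiv_X_eq_affineForm [CommRing R] {a : σ →₀ R} {i : σ} (hi : IsUnit (a i))
    (c : R) : ∃ e : MvPolynomial σ R ≃ₐ[R] MvPolynomial σ R, e (X i) = affineForm a c := by
  classical
  obtain ⟨u, hu⟩ := hi
  have hr : affineForm (a.erase i) c ∈ supported R {i}ᶜ := by
    refine add_mem (sum_mem fun j hj ↦ mul_mem (algebraMap_mem _ _) ?_) (algebraMap_mem _ c)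
    rw [Finsupp.support_erase] at hj
    exact Algebra.subset_adjoin ⟨j, Finset.ne_of_mem_erase hj, rfl⟩
  refine ⟨triangularEquiv i u _ hr, ?_⟩
  rw [triangularEquiv_X_self, hu, affineForm, affineForm, ← add_assoc,
    Finsupp.add_sum_erase' a i (fun j r ↦ C r * X j) (by simp)]

end AffineForm

section Irreducibility

variable {σ R S : Type*}

lemma prime_toMvPolynomial_iff [CommRing R] {i : σ} {f : Polynomial R} :
    Prime (f.toMvPolynomial i) ↔ Prime f := by
  have hcomp : Polynomial.toMvPolynomial i = (rename ((↑) : ({i} : Set σ) → σ)).comp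
      (uniqueAlgEquiv R ({i} : Set σ)).symm.toAlgHom := by
    ext
    simp
  rw [hcomp, AlgHom.comp_apply, prime_rename_iff]
  exact MulEquiv.prime_iff (uniqueAlgEquiv R ({i} : Set σ)).symm

lemma prime_aeval_affineForm_iff [CommRing R] {a : σ →₀ R} {i : σ} (hi : IsUnit (a i)) (c : R)
    {f : Polynomial R} : Prime (Polynomial.aeval (affineForm a c) f) ↔ Prime f := by
  obtain ⟨e, he⟩ := exists_algEquiv_X_eq_affineForm hi c
  rw [← he, Polynomial.aeval_algHom_apply, MulEquiv.prime_iff]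
  exact prime_toMvPolynomial_iff

lemma C_dvd_of_C_dvd_aeval_affineForm [CommRing R] [IsGCDMonoid R] {a : σ →₀ R}
    (ha : ∀ d, (∀ i, d ∣ a i) → IsUnit d) {c d : R} {f : Polynomial R}
    (h : C d ∣ Polynomial.aeval (affineForm a c) f) : Polynomial.C d ∣ f := by
  classical
  have hcomp (i : σ) : Polynomial.aeval (Polynomial.C (a i) * Polynomial.X + Polynomial.C c) f =
      (Polynomial.taylor c f).comp (Polynomial.C (a i) * Polynomial.X) := by
    rw [Polynomial.taylor_apply, Polynomial.comp_assoc, Polynomial.add_comp, Polynomial.X_comp,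
      Polynomial.C_comp, Polynomial.comp, Polynomial.aeval_def, Polynomial.algebraMap_eq]
  have hcoeff (i : σ) (k : ℕ) : d ∣ (Polynomial.taylor c f).coeff k * a i ^ k := by
    have hi := map_dvd (aeval (Pi.single i (Polynomial.X : Polynomial R))) h
    rw [← Polynomial.aeval_algHom_apply, aeval_single_affineForm, algHom_C, hcomp i,
      Polynomial.algebraMap_eq, Polynomial.C_dvd_iff_dvd_coeff] at hi
    simpa only [Polynomial.comp_C_mul_X_coeff] using hi k
  have htaylor : Polynomial.C d ∣ Polynomial.taylor c f := by
    refine (Polynomial.C_dvd_iff_dvd_coeff ..).2 fun k ↦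
      dvd_of_forall_dvd_mul_pow (s := a.support) (fun e he ↦ ha e fun i ↦ ?_) fun i _ ↦ hcoeff i k
    by_cases hi : i ∈ a.support
    · exact he i hi
    · rw [Finsupp.notMem_support_iff.1 hi]
      exact dvd_zero e
  simpa [Polynomial.taylor_taylor] using map_dvd (Polynomial.taylorAlgHom (-c)) htaylor

lemma irreducible_of_irreducible_map_of_forall_C_dvd [CommRing R] [CommRing S] [IsReduced S]
    {φ : R →+* S} (hφ : Function.Injective φ) {F : MvPolynomial σ R}
    (hF : ∀ d, C d ∣ F → IsUnit d) (h : Irreducible (map φ F)) : Irreducible F := by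
  have isUnit_of_map {G : MvPolynomial σ R} (hG : G ∣ F) (hu : IsUnit (map φ G)) : IsUnit G := by
    have hdeg : G.totalDegree = 0 := by
      rw [totalDegree, ← support_map_of_injective G hφ]
      exact (isUnit_iff_totalDegree_of_isReduced.1 hu).2
    rw [totalDegree_eq_zero_iff_eq_C] at hdeg
    rw [hdeg] at hG ⊢
    exact (hF _ hG).map C
  refine ⟨fun hu ↦ h.not_isUnit (hu.map _), fun G H hGH ↦ ?_⟩
  have hmap : map φ F = map φ G * map φ H := by rw [hGH, map_mul]
  exact (h.isUnit_or_isUnit hmap).imp (isUnit_of_map ⟨H, hGH⟩)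
    (isUnit_of_map ⟨G, by rw [hGH, mul_comm]⟩)

theorem irreducible_of_linear_subst_general {D : Type*} [CommRing D] [IsDomain D] [IsGCDMonoid D]
    {a : σ →₀ D} (ha : ∀ d, (∀ i, d ∣ a i) → IsUnit d) (c : D) {f : Polynomial D}
    (hf : Irreducible f) : Irreducible (Polynomial.aeval (affineForm a c) f) := by
  by_cases hdeg : f.natDegree = 0
  · obtain ⟨p, rfl⟩ := Polynomial.natDegree_eq_zero.1 hdeg
    rw [Polynomial.aeval_C]
    have hp : Irreducible p := hf.of_map
    exact ((prime_C_iff σ).2 hp.prime).irreducible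
  let ι := algebraMap D (FractionRing D)
  have hι : Function.Injective ι := IsFractionRing.injective D _
  have hprim : f.IsPrimitive := hf.isPrimitive hdeg
  obtain ⟨i, hi⟩ : ∃ i, a i ≠ 0 := by
    by_contra! ha_zero
    exact not_isUnit_zero (ha 0 fun i ↦ (ha_zero i).symm.dvd)
  have hιi : IsUnit (a.mapRange ι ι.map_zero i) := by
    simpa [map_eq_zero_iff ι hι] using hi
  have hfK : Irreducible (f.map ι) := hprim.irreducible_iff_irreducible_map_fraction_map.1 hf
  refine irreducible_of_irreducible_map_of_forall_C_dvd hι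
    (fun d hd ↦ hprim d (C_dvd_of_C_dvd_aeval_affineForm ha hd)) ?_
  rw [map_aeval_affineForm]
  exact ((prime_aeval_affineForm_iff hιi _).2 hfK.prime).irreducible

end Irreducibility

/-- Let `D` be a UFD, `a, b, c ∈ D` with `gcd(a,b) = 1`, and let
`Ψ : D[x₁] → D[x₁,x₂]` be the `D`-algebra homomorphism `x₁ ↦ a·x₁ + b·x₂ + c`. If
`f ∈ D[x₁]` is irreducible, then `Ψ(f)` is irreducible in `D[x₁,x₂]`. -/
theorem irreducible_of_linear_subst (D : Type*) [CommRing D] [IsDomain D]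
    [UniqueFactorizationMonoid D] (a b c : D) (hab : IsRelPrime a b)
    (f : Polynomial D) (hf : Irreducible f) :
    Irreducible
      (Polynomial.eval₂ MvPolynomial.C
        (MvPolynomial.C a * MvPolynomial.X 0 + MvPolynomial.C b * MvPolynomial.X 1 +
          MvPolynomial.C c) f : MvPolynomial (Fin 2) D) := by
  have hℓ : affineForm (Finsupp.equivFunOnFinite.symm ![a, b]) c = C a * X 0 + C b * X 1 + C c := by
    simp [affineForm, Finsupp.sum_fintype]
  rw [← hℓ]
  exact irreducible_of_linear_subst_general (fun d hd ↦ hab (hd 0) (hd 1)) c hf
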